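/- Let (T, f) be a dynamical system on a tree and let (cl(S_H(T)), F) be its functional envelope. If the topological entropy h(f) = 0, then h(F) = 0; and if h(f) > 0, then h(F) = +∞. -/

import Mathlib

open Set Filter Metric Topology TopologicalSpace

/-- An arc: a subset homeomorphic to `[0,1]`. -/
def IsArc {T : Type*} [TopologicalSpace T] (A : Set T) : Prop :=
  Nonempty (↥(Set.Icc (0:ℝ) 1) ≃ₜ ↥A)

/-- An arc with endpoints `x` and `y`. -/
def IsArcBetween {T : Type*} [TopologicalSpace T] (A : Set T) (x y : T) : Prop :=
  ∃ e : ↥(Set.Icc (0:ℝ) 1) ≃ₜ ↥A,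
    ((e ⟨0, by norm_num⟩ : ↥A) : T) = x ∧ ((e ⟨1, by norm_num⟩ : ↥A) : T) = y

/-- A tree: a continuum which is uniquely arcwise connected and is a point or a
union of finitely many arcs. -/
structure IsTreeSpace (T : Type*) [MetricSpace T] : Prop where
  compact : CompactSpace T
  conn : ConnectedSpace T
  uniqueArc : ∀ x y : T, x ≠ y → ∃! A : Set T, IsArcBetween A x y
  finiteArcs : (∃ x : T, (Set.univ : Set T) = {x}) ∨
    ∃ s : Finset (Set T), (∀ A ∈ s, IsArc A) ∧ ⋃₀ (s : Set (Set T)) = Set.univ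

/-- The unique arc from `x` to `y` in a tree. -/
noncomputable def treeArc {T : Type*} [MetricSpace T] (hT : IsTreeSpace T) (x y : T) :
    Set T := by
  classical exact if h : x = y then {x} else (hT.uniqueArc x y h).choose

/-- `Comp B x` : the connected component of `x` in `B` if `x ∈ B`, else `{x}`. -/
noncomputable def Comp {T : Type*} [TopologicalSpace T] (B : Set T) (x : T) : Set T := by
  classical exact if x ∈ B then connectedComponentIn B x else {x}

/-- `x` is an endpoint of the whole space (valence one). -/
def IsEnd {T : Type*} [TopologicalSpace T] (x : T) : Prop :=
  IsConnected ({x}ᶜ : Set T)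

/-- `x` is a cut-point of the whole space (valence at least two). -/
def IsCut {T : Type*} [TopologicalSpace T] (x : T) : Prop :=
  ¬ IsPreconnected ({x}ᶜ : Set T)

/-- `x` is an endpoint of the subspace `S` (valence one in `S`). -/
def IsEndpointOf {T : Type*} [TopologicalSpace T] (S : Set T) (x : T) : Prop :=
  x ∈ S ∧ IsConnected (S \ {x})

/-- A subcontinuum: a nonempty compact connected subset. -/
def IsSubcontinuum {T : Type*} [TopologicalSpace T] (A : Set T) : Prop :=
  A.Nonempty ∧ IsCompact A ∧ IsConnected A

/-- Attracting fixed point. -/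
def IsAFP {T : Type*} [TopologicalSpace T] (f : T → T) (x : T) : Prop :=
  f x = x ∧ ∀ U : Set T, IsOpen U → x ∈ U →
    ∃ V : Set T, IsOpen V ∧ x ∈ V ∧ V ⊆ U ∧ f '' closure V ⊆ V

/-- `A` is asymptotically periodic under `f`: for some `p ≥ 1` the sequence
`f^{pn}(A)` converges in the Hausdorff metric (to a nonempty compact set). -/
def AsympPeriodic {T : Type*} [MetricSpace T] (f : T → T) (A : Set T) : Prop :=
  ∃ p : ℕ, 1 ≤ p ∧ ∃ L : Set T, L.Nonempty ∧ IsCompact L ∧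
    Tendsto (fun n : ℕ => hausdorffDist (f^[p * n] '' A) L) atTop (𝓝 0)

/-- Kuratowski lower limit of a sequence of sets. -/
def KLiminf {T : Type*} [TopologicalSpace T] (A : ℕ → Set T) : Set T :=
  {x | ∀ U : Set T, IsOpen U → x ∈ U → ∀ᶠ n in atTop, (U ∩ A n).Nonempty}

/-- Kuratowski upper limit of a sequence of sets. -/
def KLimsup {T : Type*} [TopologicalSpace T] (A : ℕ → Set T) : Set T :=
  {x | ∀ U : Set T, IsOpen U → x ∈ U → ∃ᶠ n in atTop, (U ∩ A n).Nonempty}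

/-- Convergence in the hyperspace: the Kuratowski lower and upper limits agree. -/
def KConv {T : Type*} [TopologicalSpace T] (A : ℕ → Set T) : Prop :=
  KLiminf A = KLimsup A

/-- Set-theoretic limit superior of the iterated images of `A`. -/
def Ls {T : Type*} (f : T → T) (A : Set T) : Set T :=
  ⋂ m : ℕ, ⋃ n : ℕ, ⋃ (_ : m ≤ n), f^[n] '' A

/-- The hyperspace of subcontinua of `T`, with the Hausdorff metric. -/
abbrev SubCon (T : Type*) [MetricSpace T] :=
  {A : NonemptyCompacts T // IsConnected (A.1 : Set T)}

/-- The induced map on the hyperspace of subcontinua. -/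
noncomputable def indCon {T : Type*} [MetricSpace T] (f : T → T) (hf : Continuous f) :
    SubCon T → SubCon T :=
  fun A => ⟨⟨⟨f '' (A.1 : Set T), A.1.isCompact.image hf⟩, A.1.nonempty.image f⟩,
    A.2.image f hf.continuousOn⟩

/-- Topological entropy (Bowen–Dinaburg) of `f` on the subset `S`. -/
noncomputable def entropyOn {X : Type*} [MetricSpace X] (f : X → X) (S : Set X) : EReal :=
  Dynamics.coverEntropy f S

/-- Topological entropy of `f`. -/
noncomputable def entropy {X : Type*} [MetricSpace X] (f : X → X) : EReal :=
  Dynamics.coverEntropy f Set.univ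

/-- Maximal cardinality of an `(n,f,ε)`-separated subset of `S`. -/
noncomputable def sepNumOn {X : Type*} [MetricSpace X] (f : X → X) (S : Set X)
    (n : ℕ) (ε : ℝ) : ℕ :=
  sSup {k : ℕ | ∃ E : Finset X, ↑E ⊆ S ∧
    (∀ x ∈ E, ∀ y ∈ E, x ≠ y → ∃ j < n, ε < dist (f^[j] x) (f^[j] y)) ∧ E.card = k}

/-- Minimal cardinality of an `(n,f,ε)`-spanning subset of `S`. -/
noncomputable def spanNumOn {X : Type*} [MetricSpace X] (f : X → X) (S : Set X)
    (n : ℕ) (ε : ℝ) : ℕ :=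
  sInf {k : ℕ | ∃ F : Finset X, ↑F ⊆ S ∧
    (∀ x ∈ S, ∃ y ∈ F, ∀ j < n, dist (f^[j] x) (f^[j] y) ≤ ε) ∧ F.card = k}

noncomputable def sepNum {X : Type*} [MetricSpace X] (f : X → X) (n : ℕ) (ε : ℝ) : ℕ :=
  sepNumOn f Set.univ n ε

noncomputable def spanNum {X : Type*} [MetricSpace X] (f : X → X) (n : ℕ) (ε : ℝ) : ℕ :=
  spanNumOn f Set.univ n ε

/-- The graph of a map. -/
def graphOf {X : Type*} (φ : X → X) : Set (X × X) := {p | p.2 = φ p.1}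

/-- The functional envelope: the closure, in the hyperspace of nonempty compact
subsets of `X × X` with the Hausdorff metric, of the set of graphs of continuous
self-maps of `X`. -/
def FunctionalEnvelope (X : Type*) [MetricSpace X] :
    Set (NonemptyCompacts (X × X)) :=
  closure {G : NonemptyCompacts (X × X) | ∃ φ : X → X, Continuous φ ∧
    (G : Set (X × X)) = graphOf φ}

/-- `F` is the map induced by `f` on the functional envelope:
`F(φ) = f ∘ φ`, i.e. on graphs, `F(G) = (id × f)(G)`. -/
def IsEnvelopeMap {X : Type*} [MetricSpace X] (f : X → X)
    (F : ↥(FunctionalEnvelope X) → ↥(FunctionalEnvelope X)) : Prop :=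
  ∀ G : ↥(FunctionalEnvelope X),
    ((F G : NonemptyCompacts (X × X)) : Set (X × X)) =
      Prod.map id f '' ((G : NonemptyCompacts (X × X)) : Set (X × X))

/-- The setoid on `T` identifying all points of `M` (so that `Quotient` is `T/M`). -/
def collapseSetoid {T : Type*} (M : Set T) : Setoid T where
  r a b := a = b ∨ (a ∈ M ∧ b ∈ M)
  iseqv := by
    refine ⟨fun a => Or.inl rfl, ?_, ?_⟩
    · rintro a b (rfl | ⟨h1, h2⟩)
      exacts [Or.inl rfl, Or.inr ⟨h2, h1⟩]
    · rintro a b c (rfl | ⟨h1, h2⟩) h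
      · exact h
      · rcases h with rfl | ⟨h3, h4⟩
        exacts [Or.inr ⟨h1, h2⟩, Or.inr ⟨h1, h4⟩]

/-
Zero entropy. The hit pattern of a set `A` is the set of members of a finite cover that `A` meets.
As `A` ranges over the connected sets through a point `p`, the traces of `A` on each of the finitely
many monotone paths that issue from `p` are nested initial segments, so a hit pattern is determined
by one number per path. Hence, as long as the images of `A` contain an orbit, the hit patterns of
the first `n` of them take only polynomially many values in `n`; and as long as these images avoid a
fine finite subset of the tree, they have small diameter and are followed by the orbit of any one
point of `A`. So the `n`-orbits of the graphs of maps are covered, up to polynomial factors, by a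
fixed power of the number of balls needed for the `n`-orbits of `f`.

Positive entropy. A continuous map can take prescribed values near any `m` given points. Thus the
envelope separates at least as many `n`-orbits as the `m`-fold product of `f` does, so its entropy
is at least `m` times that of `f`, for every `m`.
-/

section Arcs

variable {T : Type*} [TopologicalSpace T]

/-- `x` and `y` are joined inside `U` by an injective path; the parameter interval `[a, b]` may
degenerate to a point, so that the relation is reflexive on `U`. -/
def ArcJoined (U : Set T) (x y : T) : Prop :=
  ∃ (a b : ℝ) (γ : ℝ → T), a ≤ b ∧ Continuous γ ∧ InjOn γ (Icc a b) ∧ γ a = x ∧ γ b = y ∧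
    MapsTo γ (Icc a b) U

theorem ArcJoined.symm {U : Set T} {x y : T} (h : ArcJoined U x y) : ArcJoined U y x := by
  obtain ⟨a, b, γ, hab, hγ, hinj, rfl, rfl, hU⟩ := h
  have hneg : MapsTo Neg.neg (Icc (-b) (-a)) (Icc a b) := fun t ht =>
    ⟨le_neg_of_le_neg ht.2, neg_le_of_neg_le ht.1⟩
  exact ⟨-b, -a, γ ∘ Neg.neg, neg_le_neg hab, hγ.comp continuous_neg,
    hinj.comp neg_injective.injOn hneg, by simp, by simp, hU.comp hneg⟩

theorem injOn_IccExtend {T : Type*} {γ : unitInterval → T} (hγ : Function.Injective γ) :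
    InjOn (IccExtend zero_le_one γ) (Icc 0 1) := fun r hr r' hr' h => by
  rw [IccExtend_of_mem _ _ hr, IccExtend_of_mem _ _ hr'] at h
  exact congrArg Subtype.val (hγ h)

theorem ArcJoined.of_injective {γ : C(unitInterval, T)} (hγ : Function.Injective γ)
    {U : Set T} {s t : unitInterval} (hU : MapsTo γ (uIcc s t) U) : ArcJoined U (γ s) (γ t) := by
  wlog hst : s ≤ t generalizing s t
  · exact (this (uIcc_comm s t ▸ hU) (le_of_not_ge hst)).symm
  have hIcc : Icc (s : ℝ) t ⊆ Icc 0 1 := Icc_subset_Icc s.2.1 t.2.2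
  refine ⟨s, t, IccExtend zero_le_one γ, hst, γ.continuous.Icc_extend',
    (injOn_IccExtend hγ).mono hIcc, IccExtend_val _ _ _, IccExtend_val _ _ _, fun r hr => ?_⟩
  rw [IccExtend_of_mem _ _ (hIcc hr)]
  exact hU (uIcc_of_le hst ▸ hr)

theorem ArcJoined.of_concat {U : Set T} {α β : ℝ → T} {a b c : ℝ} (hab : a ≤ b) (hbc : b ≤ c)
    (hα : Continuous α) (hβ : Continuous β) (hαβ : α b = β b) (hαi : InjOn α (Icc a b))
    (hβi : InjOn β (Icc b c)) (hne : ∀ u ∈ Ico a b, ∀ v ∈ Icc b c, α u ≠ β v)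
    (hαU : MapsTo α (Icc a b) U) (hβU : MapsTo β (Icc b c) U) : ArcJoined U (α a) (β c) := by
  set γ : ℝ → T := fun t => if t ≤ b then α t else β t with hγ
  have hγα : EqOn γ α (Iic b) := fun t ht => if_pos ht
  have hγβ : EqOn γ β (Ici b) := fun t ht => by
    rcases (mem_Ici.1 ht).eq_or_lt with rfl | hlt
    · exact (hγα self_mem_Iic).trans hαβ
    · exact if_neg hlt.not_ge
  have hα' : EqOn γ α (Ico a b) := hγα.mono fun t ht => ht.2.le
  have hβ' : EqOn γ β (Icc b c) := hγβ.mono fun t ht => ht.1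
  refine ⟨a, c, γ, hab.trans hbc, ?_, ?_, hγα hab, hγβ hbc, ?_⟩
  · refine hα.if_le hβ continuous_id continuous_const ?_
    rintro t rfl
    exact hαβ
  all_goals rw [← Ico_union_Icc_eq_Icc hab hbc]
  · refine (injOn_union <| disjoint_left.2 fun t ht ht' => ht'.1.not_gt ht.2).2
      ⟨hα'.injOn_iff.2 (hαi.mono Ico_subset_Icc_self), hβ'.injOn_iff.2 hβi, fun u hu v hv => ?_⟩
    rw [hα' hu, hβ' hv]
    exact hne u hu v hv
  · exact ((hαU.mono_left Ico_subset_Icc_self).congr hα'.symm).union (hβU.congr hβ'.symm)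

theorem ArcJoined.trans [T2Space T] {U : Set T} {x y z : T} (hxy : ArcJoined U x y)
    (hyz : ArcJoined U y z) : ArcJoined U x z := by
  obtain ⟨a, b, α, hab, hα, hαi, rfl, rfl, hαU⟩ := hxy
  obtain ⟨c, d, β, hcd, hβ, hβi, hcb, rfl, hβU⟩ := hyz
  -- `α t` is the first point of `α` on `β`.
  obtain ⟨t, ⟨ht, s, hs, hst⟩, hfirst⟩ :=
    (isCompact_Icc.inter_right ((isCompact_Icc.image hβ).isClosed.preimage hα)).exists_isLeast
      (show (Icc a b ∩ α ⁻¹' (β '' Icc c d)).Nonempty from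
        ⟨b, right_mem_Icc.2 hab, c, left_mem_Icc.2 hcd, hcb⟩)
  have hshift : MapsTo (· + (s - t)) (Icc t (t + (d - s))) (Icc c d) := fun v hv =>
    ⟨by linarith [hs.1, hv.1], by linarith [hv.2]⟩
  have hend : β (t + (d - s) + (s - t)) = β d := congrArg β (by ring)
  rw [← hend]
  refine ArcJoined.of_concat (β := fun v => β (v + (s - t))) ht.1 (by linarith [hs.2]) hα
    (by fun_prop) ?_ (hαi.mono (Icc_subset_Icc_right ht.2))
    (hβi.comp (add_left_injective _).injOn hshift) (fun u hu v hv huv => ?_)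
    (hαU.mono_left (Icc_subset_Icc_right ht.2)) (hβU.comp hshift)
  · rw [← hst, add_sub_cancel]
  · exact (hfirst ⟨⟨hu.1, hu.2.le.trans ht.2⟩, _, hshift hv, huv.symm⟩).not_gt hu.2

theorem isArcBetween_image_Icc [T2Space T] {γ : ℝ → T} {a b : ℝ} (hab : a < b)
    (hγ : Continuous γ) (hinj : InjOn γ (Icc a b)) :
    IsArcBetween (γ '' Icc a b) (γ a) (γ b) := by
  have hemb : IsClosedEmbedding ((Icc a b).domRestrict γ) :=
    hγ.continuousOn.domRestrict.isClosedEmbedding (injOn_iff_injective.1 hinj)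
  refine ⟨(iccHomeoI a b hab).symm.trans (hemb.toIsEmbedding.toHomeomorph.trans
    (Homeomorph.setCongr (range_domRestrict γ _))), ?_, ?_⟩
  · change γ ((iccHomeoI a b hab).symm 0) = γ a
    simp
  · change γ ((iccHomeoI a b hab).symm 1) = γ b
    simp

theorem eventually_arcJoined [T2Space T] {κ : Type*} [Finite κ] {γ : κ → C(unitInterval, T)}
    (hinj : ∀ k, Function.Injective (γ k)) (hcov : ⋃ k, range (γ k) = univ) {U : Set T}
    (hU : IsOpen U) {x : T} (hx : x ∈ U) : ∀ᶠ y in 𝓝 x, ArcJoined U x y := by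
  have hpath : ∀ k, ∀ᶠ y in 𝓝 x, ∀ t, γ k t = y → ArcJoined U x y := fun k => by
    have hemb : IsClosedEmbedding (γ k) := (γ k).continuous.isClosedEmbedding (hinj k)
    suffices h : ∀ᶠ t in comap (γ k) (𝓝 x), ArcJoined U x (γ k t) by
      filter_upwards [eventually_comap.1 h] with y hy t ht
      exact ht ▸ hy t ht
    by_cases hxk : x ∈ range (γ k)
    · obtain ⟨s, rfl⟩ := hxk
      rw [← hemb.nhds_eq_comap]
      have hsmall : ∀ᶠ t in 𝓝 s, uIcc s t ⊆ γ k ⁻¹' U :=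
        (tendsto_const_nhds.uIcc tendsto_id).eventually
          (eventually_smallSets_subset.2 ((hU.preimage (γ k).continuous).mem_nhds hx))
      exact hsmall.mono fun t ht => .of_injective (hinj k) ht
    · rw [comap_eq_bot_iff_compl_range.2 (hemb.isClosed_range.isOpen_compl.mem_nhds hxk)]
      exact eventually_bot
  filter_upwards [eventually_all.2 hpath] with y hy
  obtain ⟨k, t, rfl⟩ := mem_iUnion.1 (hcov.symm ▸ mem_univ y)
  exact hy k t rfl

theorem arcJoined_of_isPreconnected [T2Space T] {κ : Type*} [Finite κ]
    {γ : κ → C(unitInterval, T)} (hinj : ∀ k, Function.Injective (γ k))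
    (hcov : ⋃ k, range (γ k) = univ) {C U : Set T} (hC : IsPreconnected C) (hU : IsOpen U)
    (hCU : C ⊆ U) {x y : T} (hx : x ∈ C) (hy : y ∈ C) : ArcJoined U x y :=
  hC.induction₂ (ArcJoined U)
    (fun _ hz => eventually_nhdsWithin_of_eventually_nhds
      (eventually_arcJoined hinj hcov hU (hCU hz)))
    (fun _ _ _ _ _ _ => ArcJoined.trans) (fun _ _ _ _ => ArcJoined.symm) hx hy

end Arcs

section MonotonePaths

variable {T : Type*} [TopologicalSpace T]

/-- A path is monotone if it pulls connected sets back to intervals. -/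
def IsMonotonePath (γ : C(unitInterval, T)) : Prop :=
  ∀ C : Set T, IsPreconnected C → (γ ⁻¹' C).OrdConnected

theorem isMonotonePath_const (p : T) : IsMonotonePath (.const unitInterval p) := fun _ _ =>
  ⟨fun _ hs _ _ _ _ => hs⟩

theorem IsMonotonePath.range_subset {γ : C(unitInterval, T)} (hγ : IsMonotonePath γ) {C : Set T}
    (hC : IsPreconnected C) (h0 : γ 0 ∈ C) (h1 : γ 1 ∈ C) : range γ ⊆ C := by
  rintro _ ⟨t, rfl⟩
  exact (hγ C hC).out h0 h1 ⟨unitInterval.nonneg', unitInterval.le_one'⟩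

/-- The space is, from each of its points `p`, a union of monotone paths issuing from `p`, indexed
by `κ`. -/
def HasMonotoneFans (κ T : Type*) [TopologicalSpace T] : Prop :=
  ∀ p : T, ∃ γ : κ → C(unitInterval, T),
    (∀ k, IsMonotonePath (γ k)) ∧ (∀ k, γ k 0 = p) ∧ ⋃ k, range (γ k) = univ

theorem HasMonotoneFans.of_paths {κ : Type*} {γ : κ → C(unitInterval, T)}
    (hγ : ∀ k, IsMonotonePath (γ k)) (hcov : ⋃ k, range (γ k) = univ)
    (hjoin : ∀ x y : T, ∃ β : C(unitInterval, T), IsMonotonePath β ∧ β 0 = x ∧ β 1 = y) :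
    HasMonotoneFans (κ × Bool) T := fun p => by
  choose β hβ hβ0 hβ1 using hjoin p
  refine ⟨fun i => β (γ i.1 (bif i.2 then 1 else 0)), fun i => hβ _, fun i => hβ0 _,
    eq_univ_of_univ_subset ?_⟩
  rw [← hcov]
  refine iUnion_subset fun k => ?_
  have hspokes : IsPreconnected (range (β (γ k 0)) ∪ range (β (γ k 1))) :=
    (isPreconnected_range (β _).continuous).union p ⟨0, hβ0 _⟩ ⟨0, hβ0 _⟩
      (isPreconnected_range (β _).continuous)
  calc range (γ k) ⊆ range (β (γ k 0)) ∪ range (β (γ k 1)) :=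
        (hγ k).range_subset hspokes (.inl ⟨1, hβ1 _⟩) (.inr ⟨1, hβ1 _⟩)
    _ ⊆ ⋃ i : κ × Bool, range (β (γ i.1 (bif i.2 then 1 else 0))) :=
        union_subset (subset_iUnion_of_subset (k, false) subset_rfl)
          (subset_iUnion_of_subset (k, true) subset_rfl)

end MonotonePaths

section Trees

universe u

variable {T : Type u} [MetricSpace T]

theorem IsTreeSpace.exists_arcs [Nontrivial T] (hT : IsTreeSpace T) :
    ∃ (s : Finset (Set T)) (γ : s → C(unitInterval, T)),
      (∀ k, Function.Injective (γ k)) ∧ ⋃ k, range (γ k) = univ := by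
  obtain ⟨x, hx⟩ | ⟨s, hs, hcov⟩ := hT.finiteArcs
  · exact absurd hx nontrivial_univ.ne_singleton
  let e (A : s) : Icc (0 : ℝ) 1 ≃ₜ (A : Set T) := (hs A A.2).some
  refine ⟨s, fun A => ⟨fun t => e A t, by fun_prop⟩,
    fun A => Subtype.val_injective.comp (e A).injective, ?_⟩
  have hrange : ∀ A : s, range (fun t => (e A t : T)) = A := fun A =>
    ((e A).surjective.range_comp Subtype.val).trans Subtype.range_val
  exact (iUnion_congr hrange).trans (sUnion_eq_iUnion.symm.trans hcov)

/- If a connected set `C` missed `γ r` but met `γ` on both sides of it, two points of `γ` would be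
joined by an arc close to `C`, avoiding `γ r`, as well as by the subarc of `γ` through `γ r`. -/
theorem IsTreeSpace.isMonotonePath (hT : IsTreeSpace T) {γ : C(unitInterval, T)}
    (hγ : Function.Injective γ) : IsMonotonePath γ := by
  refine fun C hC => ⟨fun s hs t ht r hr => by_contra fun hrC => ?_⟩
  have := hγ.nontrivial
  obtain ⟨_, Γ, hΓ, hcov⟩ := hT.exists_arcs
  have hsr : s < r := hr.1.lt_of_ne fun h => hrC (h ▸ hs)
  have hrt : r < t := hr.2.lt_of_ne fun h => hrC (h ▸ ht)
  have hst : (s : ℝ) < t := hsr.trans hrt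
  have hne : γ s ≠ γ t := hγ.ne (hsr.trans hrt).ne
  have harc : IsArcBetween (IccExtend zero_le_one γ '' Icc s t) (γ s) (γ t) := by
    simpa only [IccExtend_val] using isArcBetween_image_Icc hst γ.continuous.Icc_extend'
      ((injOn_IccExtend hγ).mono (Icc_subset_Icc s.2.1 t.2.2))
  obtain ⟨a, b, δ, hab, hδ, hδi, hδa, hδb, hδr⟩ := arcJoined_of_isPreconnected hΓ hcov hC
    (isOpen_compl_singleton (x := γ r)) (subset_compl_singleton_iff.2 hrC) hs ht
  have hab : a < b := hab.lt_of_ne fun h => hne (hδa.symm.trans ((congrArg δ h).trans hδb))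
  have harc' : IsArcBetween (δ '' Icc a b) (γ s) (γ t) :=
    hδa ▸ hδb ▸ isArcBetween_image_Icc hab hδ hδi
  have hr : γ r ∈ δ '' Icc a b := (hT.uniqueArc _ _ hne).unique harc harc' ▸
    ⟨r, ⟨hsr.le, hrt.le⟩, IccExtend_val _ _ _⟩
  exact hδr.image_subset hr rfl

theorem IsTreeSpace.exists_isMonotonePath (hT : IsTreeSpace T) (x y : T) :
    ∃ β : C(unitInterval, T), IsMonotonePath β ∧ β 0 = x ∧ β 1 = y := by
  rcases eq_or_ne x y with rfl | hne
  · exact ⟨.const _ x, isMonotonePath_const x, rfl, rfl⟩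
  · obtain ⟨_, ⟨e, h0, h1⟩, -⟩ := hT.uniqueArc x y hne
    exact ⟨⟨fun t => e t, by fun_prop⟩,
      hT.isMonotonePath (Subtype.val_injective.comp e.injective), h0, h1⟩

theorem IsTreeSpace.pathConnectedSpace (hT : IsTreeSpace T) : PathConnectedSpace T where
  nonempty := hT.conn.toNonempty
  joined x y :=
    have ⟨β, _, h0, h1⟩ := hT.exists_isMonotonePath x y
    ⟨⟨β, h0, h1⟩⟩

theorem IsTreeSpace.exists_hasMonotoneFans (hT : IsTreeSpace T) :
    ∃ (κ : Type u) (_ : Finite κ), HasMonotoneFans κ T := by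
  cases subsingleton_or_nontrivial T
  · exact ⟨PUnit, inferInstance, fun p => ⟨fun _ => .const _ p,
      fun _ => isMonotonePath_const p, fun _ => rfl,
      Subsingleton.eq_univ_of_nonempty ⟨p, mem_iUnion.2 ⟨.unit, 0, rfl⟩⟩⟩⟩
  · obtain ⟨s, γ, hγ, hcov⟩ := hT.exists_arcs
    exact ⟨s × Bool, inferInstance,
      .of_paths (fun k => hT.isMonotonePath (hγ k)) hcov hT.exists_isMonotonePath⟩

end Trees

section Codes

variable {X Y : Type*}

/-- The relation `R` contains the kernel of a map to a set of `N` codes: knowing only its code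
determines a point up to `R`. -/
def Codable (R : X → X → Prop) (N : ℕ) : Prop :=
  ∃ c : X → Fin N, ∀ x y, c x = c y → R x y

theorem Codable.of_fintype {C : Type*} [Fintype C] {R : X → X → Prop} {N : ℕ}
    (hN : Fintype.card C ≤ N) (c : X → C) (hc : ∀ x y, c x = c y → R x y) : Codable R N :=
  ⟨Fin.castLE hN ∘ Fintype.equivFin C ∘ c, fun x y h =>
    hc x y ((Fintype.equivFin C).injective (Fin.castLE_injective hN h))⟩

theorem Codable.mono {R S : X → X → Prop} {N : ℕ} (hR : Codable R N)
    (hRS : ∀ x y, R x y → S x y) : Codable S N := by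
  obtain ⟨c, hc⟩ := hR
  exact ⟨c, fun x y h => hRS x y (hc x y h)⟩

theorem Codable.comap {R : X → X → Prop} {N : ℕ} (hR : Codable R N) (g : Y → X) :
    Codable (fun a b => R (g a) (g b)) N := by
  obtain ⟨c, hc⟩ := hR
  exact ⟨c ∘ g, fun a b => hc (g a) (g b)⟩

theorem Codable.and {R S : X → X → Prop} {M N : ℕ} (hR : Codable R M) (hS : Codable S N) :
    Codable (fun x y => R x y ∧ S x y) (M * N) := by
  obtain ⟨c, hc⟩ := hR
  obtain ⟨d, hd⟩ := hS
  exact .of_fintype (by simp) (fun x => (c x, d x)) fun x y h =>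
    ⟨hc x y (congrArg Prod.fst h), hd x y (congrArg Prod.snd h)⟩

theorem Codable.pi {ι : Type*} [Fintype ι] {R : X → X → Prop} {N : ℕ} (hR : Codable R N) :
    Codable (fun x y : ι → X => ∀ i, R (x i) (y i)) (N ^ Fintype.card ι) := by
  classical
  obtain ⟨c, hc⟩ := hR
  exact .of_fintype (by simp) (fun x i => c (x i)) fun x y h i => hc _ _ (congrFun h i)

theorem Codable.of_fiberwise {ι : Type*} [Fintype ι] (g : X → ι) {R : X → X → Prop} {N : ℕ}
    (hR : ∀ i, Codable (fun x y => g x = i → g y = i → R x y) N) :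
    Codable R (Fintype.card ι * N) := by
  choose c hc using hR
  refine .of_fintype (by simp) (fun x => (g x, c (g x) x)) fun x y h => ?_
  obtain ⟨hg, hcode⟩ := Prod.ext_iff.1 h
  exact hc (g x) x y (hcode.trans (by rw [show g x = g y from hg])) rfl hg.symm

theorem Codable.coverMincard_range_le {f : X → X} {Φ : Y → X} {U : SetRel X X} {n N : ℕ}
    (h : Codable (fun a b => (Φ a, Φ b) ∈ Dynamics.dynEntourage f U n) N) :
    Dynamics.coverMincard f (range Φ) U n ≤ N := by
  classical
  obtain ⟨c, hc⟩ := h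
  cases isEmpty_or_nonempty Y
  · rw [range_eq_empty, Dynamics.coverMincard_empty]
    exact zero_le
  let s := Finset.univ.image (Φ ∘ Function.invFun c)
  have hs : Dynamics.IsDynCoverOf f (range Φ) U n (s : Set X) := by
    rintro _ ⟨a, rfl⟩
    exact ⟨Φ (Function.invFun c (c a)), Finset.mem_coe.2 (Finset.mem_image_of_mem _
      (Finset.mem_univ (c a))), hc _ _ (Function.invFun_eq ⟨a, rfl⟩).symm⟩
  calc Dynamics.coverMincard f (range Φ) U n ≤ s.card := hs.coverMincard_le_card
    _ ≤ N := by exact_mod_cast Finset.card_image_le.trans (Finset.card_fin N).le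

end Codes

section HitPatterns

variable {T ι : Type*}

/-- The hit pattern of `A`: the members of the family `W` that meet `A`. -/
def hits (W : ι → Set T) (A : Set T) : Set ι := {i | (A ∩ W i).Nonempty}

theorem hits_mono (W : ι → Set T) {A B : Set T} (h : A ⊆ B) : hits W A ⊆ hits W B :=
  fun _ hi => hi.mono (inter_subset_inter_left _ h)

theorem hits_iUnion {κ : Type*} (W : ι → Set T) (A : κ → Set T) :
    hits W (⋃ k, A k) = ⋃ k, hits W (A k) := by
  ext i
  simp only [hits, mem_ofPred_eq, iUnion_inter, nonempty_iUnion, mem_iUnion]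

theorem mem_hits_image {S : Type*} {W : ι → Set T} {f : S → T} {A : Set S} {i : ι} :
    i ∈ hits W (f '' A) ↔ (A ∩ f ⁻¹' W i).Nonempty := image_inter_nonempty_iff

theorem hits_eq_of_ncard_eq [Finite ι] (W : ι → Set T) {A B : Set T} (h : A ⊆ B ∨ B ⊆ A)
    (hcard : (hits W A).ncard = (hits W B).ncard) : hits W A = hits W B :=
  h.elim (fun hAB => eq_of_subset_of_ncard_le (hits_mono W hAB) hcard.ge)
    fun hBA => (eq_of_subset_of_ncard_le (hits_mono W hBA) hcard.le).symm

variable [TopologicalSpace T]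

theorem IsMonotonePath.inter_range_total {γ : C(unitInterval, T)} (hγ : IsMonotonePath γ)
    {A B : Set T} (hA : IsPreconnected A) (hB : IsPreconnected B) (h0A : γ 0 ∈ A)
    (h0B : γ 0 ∈ B) : A ∩ range γ ⊆ B ∩ range γ ∨ B ∩ range γ ⊆ A ∩ range γ := by
  have hlower : ∀ C, IsPreconnected C → γ 0 ∈ C → IsLowerSet (γ ⁻¹' C) := fun C hC h0 s t hts hs =>
    (hγ C hC).out h0 hs ⟨unitInterval.nonneg', hts⟩
  simp only [← image_preimage_eq_inter_range]
  exact ((hlower A hA h0A).total (hlower B hB h0B)).imp (image_mono ·) (image_mono ·)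

/- Along each path of a fan at `p`, the connected sets through `p` form a chain, so the hit pattern
there is determined by its size. -/
theorem HasMonotoneFans.codable_hits {κ : Type*} [Fintype κ] [Fintype ι]
    (hT : HasMonotoneFans κ T) (W : ι → Set T) (p : T) :
    Codable (fun A B : {A : Set T // IsPreconnected A} =>
        p ∈ A.1 → p ∈ B.1 → hits W A.1 = hits W B.1)
      ((Fintype.card ι + 1) ^ Fintype.card κ) := by
  classical
  obtain ⟨γ, hγ, h0, hcov⟩ := hT p
  have hcard (A : Set T) : (hits W A).ncard < Fintype.card ι + 1 :=
    Nat.lt_succ_of_le <| (ncard_le_card _).trans_eq Nat.card_eq_fintype_card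
  have hsplit (A : Set T) : hits W A = ⋃ k, hits W (A ∩ range (γ k)) := by
    rw [← hits_iUnion, ← inter_iUnion, hcov, inter_univ]
  refine .of_fintype (by simp)
    (fun A k => (⟨_, hcard (A.1 ∩ range (γ k))⟩ : Fin (Fintype.card ι + 1)))
    fun A B hAB hpA hpB => ?_
  rw [hsplit A.1, hsplit B.1]
  exact iUnion_congr fun k => hits_eq_of_ncard_eq W
    ((hγ k).inter_range_total A.2 B.2 (h0 k ▸ hpA) (h0 k ▸ hpB))
    (congrArg Fin.val (congrFun hAB k))

end HitPatterns

section Metric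

variable {X : Type*} [PseudoEMetricSpace X]

/- The distance to `x ∈ A` maps `A` onto an interval whose length, at least `edist x y`, is bounded
by the total length of the images of the `Q k`. -/
theorem ediam_le_sum_ediam {X : Type*} [PseudoMetricSpace X] {κ : Type*} [Fintype κ] {A : Set X}
    (hA : IsPreconnected A) {Q : κ → Set X} (hQ : A ⊆ ⋃ k, Q k) :
    ediam A ≤ ∑ k, ediam (Q k) := by
  refine ediam_le fun x hx y hy => ?_
  have hsub : Icc 0 (dist y x) ⊆ ⋃ k, (dist · x) '' Q k :=
    calc Icc 0 (dist y x) ⊆ (dist · x) '' A :=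
          (hA.image _ (by fun_prop)).Icc_subset ⟨x, hx, dist_self x⟩ ⟨y, hy, rfl⟩
      _ ⊆ ⋃ k, (dist · x) '' Q k := image_iUnion ▸ image_mono hQ
  calc edist x y = MeasureTheory.volume (Icc 0 (dist y x)) := by
        rw [Real.volume_Icc, sub_zero, ← edist_dist, edist_comm]
    _ ≤ ∑ k, MeasureTheory.volume ((dist · x) '' Q k) :=
        (MeasureTheory.measure_mono hsub).trans (MeasureTheory.measure_iUnion_fintype_le _ _)
    _ ≤ ∑ k, ediam (Q k) := Finset.sum_le_sum fun k _ => (Real.volume_le_diam _).trans <| by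
        simpa using (LipschitzWith.dist_left x).ediam_image_le (Q k)

theorem hausdorffEDist_le_of_hits_eq {ι : Type*} {P : ι → Set X} {ε : ENNReal}
    (hcov : ⋃ i, P i = univ) (hP : ∀ i, ediam (P i) ≤ ε) {A B : Set X}
    (h : hits P A = hits P B) : hausdorffEDist A B ≤ ε := by
  suffices hclose : ∀ A B : Set X, hits P A ⊆ hits P B → ∀ x ∈ A, ∃ y ∈ B, edist x y ≤ ε from
    hausdorffEDist_le_of_mem_edist (hclose A B h.subset) (hclose B A h.superset)
  intro A B hAB x hx
  obtain ⟨i, hxi⟩ := mem_iUnion.1 (hcov.symm ▸ mem_univ x)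
  obtain ⟨y, hy, hyi⟩ := hAB ⟨x, hx, hxi⟩
  exact ⟨y, hy, (edist_le_ediam_of_mem hxi hyi).trans (hP i)⟩

theorem hausdorffEDist_le_of_ediam_le {A B : Set X} {η δ : ENNReal} (hA : ediam A ≤ η)
    (hB : ediam B ≤ η) {x y : X} (hx : x ∈ A) (hy : y ∈ B) (hxy : edist x y ≤ δ) :
    hausdorffEDist A B ≤ η + δ := by
  refine hausdorffEDist_le_of_mem_edist (fun a ha => ⟨y, hy, ?_⟩) fun b hb => ⟨x, hx, ?_⟩
  · exact (edist_triangle a x y).trans (add_le_add ((edist_le_ediam_of_mem ha hx).trans hA) hxy)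
  · rw [edist_comm] at hxy
    exact (edist_triangle b y x).trans (add_le_add ((edist_le_ediam_of_mem hb hy).trans hB) hxy)

end Metric

section Subdivision

variable {T : Type*} [PseudoMetricSpace T]

theorem exists_partition_ediam_image_le {X : Type*} [PseudoEMetricSpace X] (γ : C(unitInterval, X))
    {δ : ENNReal} (hδ : 0 < δ) :
    ∃ (m : ℕ) (t : ℕ → unitInterval), t 0 = 0 ∧ t (m + 1) = 1 ∧ Monotone t ∧
      ∀ l, ediam (γ '' Icc (t l) (t (l + 1))) ≤ δ := by
  obtain ⟨δ', hδ', hδδ'⟩ : ∃ δ' > 0, 2 * δ' ≤ δ :=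
    ⟨δ / 2, ENNReal.half_pos hδ.ne', ENNReal.mul_div_le⟩
  obtain ⟨t, ht0, ht, ⟨m, hm⟩, hsub⟩ := exists_monotone_Icc_subset_open_cover_unitInterval
    (c := fun x => γ ⁻¹' eball x δ') (fun x => isOpen_eball.preimage γ.continuous)
    (fun s _ => mem_iUnion.2 ⟨γ s, mem_eball_self hδ'⟩)
  refine ⟨m, t, ht0, hm (m + 1) m.le_succ, ht, fun l => ?_⟩
  obtain ⟨x, hx⟩ := hsub l
  exact (ediam_mono (image_subset_iff.2 hx)).trans (ediam_eball_le.trans hδδ')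

theorem exists_mem_Icc_succ {α : Type*} [LinearOrder α] {t : ℕ → α} {s : α} (h0 : t 0 ≤ s) :
    ∀ {m : ℕ}, s ≤ t (m + 1) → ∃ l < m + 1, s ∈ Icc (t l) (t (l + 1))
  | 0, hm => ⟨0, Nat.one_pos, h0, hm⟩
  | m + 1, hm => by
    rcases le_total s (t (m + 1)) with h | h
    · obtain ⟨l, hl, hs⟩ := exists_mem_Icc_succ h0 h
      exact ⟨l, hl.trans (Nat.lt_succ_self _), hs⟩
    · exact ⟨m + 1, Nat.lt_succ_self _, h, hm⟩

theorem IsMonotonePath.exists_subdivision {γ : C(unitInterval, T)} (hγ : IsMonotonePath γ)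
    {δ : ENNReal} (hδ : 0 < δ) : ∃ (m : ℕ) (P : Fin m → Set T) (D : Finset T),
      range γ ⊆ ⋃ l, P l ∧ (∀ l, IsConnected (P l) ∧ ediam (P l) ≤ δ) ∧
      ∀ A : Set T, IsPreconnected A → Disjoint A D → ediam (A ∩ range γ) ≤ δ := by
  classical
  obtain ⟨m, t, h0, hm, ht, hsmall⟩ := exists_partition_ediam_image_le γ hδ
  have hIcc : ∀ s, ∃ l < m + 1, s ∈ Icc (t l) (t (l + 1)) := fun s =>
    exists_mem_Icc_succ (h0 ▸ unitInterval.nonneg') (hm ▸ unitInterval.le_one')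
  refine ⟨m + 1, fun l => γ '' Icc (t l) (t (l + 1)), (Finset.range (m + 2)).image (γ ∘ t), ?_,
    fun l => ⟨(isConnected_Icc (ht (Nat.le_succ l.1))).image _ γ.continuous.continuousOn,
      hsmall l⟩, fun A hA hD => ?_⟩
  · rintro _ ⟨s, rfl⟩
    obtain ⟨l, hl, hs⟩ := hIcc s
    exact mem_iUnion.2 ⟨⟨l, hl⟩, s, hs, rfl⟩
  rw [← image_preimage_eq_inter_range]
  obtain hempty | ⟨s, hs⟩ := (γ ⁻¹' A).eq_empty_or_nonempty
  · simp [hempty]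
  have hord := hγ A hA
  have havoid : ∀ l ≤ m + 1, t l ∉ γ ⁻¹' A := fun l hl hlA => disjoint_left.1 hD hlA <|
    Finset.mem_coe.2 <| Finset.mem_image_of_mem _ (Finset.mem_range_succ_iff.2 hl)
  obtain ⟨l, hl, hsl⟩ := hIcc s
  have hsub : γ ⁻¹' A ⊆ Icc (t l) (t (l + 1)) := fun r hr => by
    refine ⟨?_, ?_⟩ <;> by_contra! hrl
    · exact havoid l hl.le (hord.out hr hs ⟨hrl.le, hsl.1⟩)
    · exact havoid (l + 1) hl (hord.out hs hr ⟨hsl.2, hrl.le⟩)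
  exact (ediam_mono (image_mono hsub)).trans (hsmall l)

universe u

theorem HasMonotoneFans.exists_subdivision {κ : Type u} [Finite κ] [Nonempty T]
    (hT : HasMonotoneFans κ T) {ε : ENNReal} (hε : 0 < ε) :
    ∃ (J : Type u) (_ : Fintype J) (P : J → Set T) (D : Finset T),
      ⋃ j, P j = univ ∧ (∀ j, IsConnected (P j) ∧ ediam (P j) ≤ ε) ∧
      ∀ A : Set T, IsPreconnected A → Disjoint A D → ediam A ≤ ε := by
  classical
  cases nonempty_fintype κ
  obtain ⟨γ, hγ, -, hcov⟩ := hT (Classical.arbitrary T)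
  have hδ : 0 < min ε (ε / Fintype.card κ) :=
    lt_min hε (ENNReal.div_pos hε.ne' (ENNReal.natCast_ne_top _))
  choose m P D hrange hP hD using fun k => (hγ k).exists_subdivision hδ
  refine ⟨Σ k, Fin (m k), inferInstance, fun j => P j.1 j.2, Finset.univ.biUnion D,
    eq_univ_of_univ_subset ?_,
    fun j => ⟨(hP j.1 j.2).1, (hP j.1 j.2).2.trans (min_le_left _ _)⟩, fun A hA hAD => ?_⟩
  · rw [← hcov, iUnion_sigma]
    exact iUnion_mono hrange
  have hADk : ∀ k, Disjoint A (D k) := fun k => hAD.mono_right <|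
    Finset.coe_subset.2 (Finset.subset_biUnion_of_mem D (Finset.mem_univ k))
  calc ediam A ≤ ∑ k, ediam (A ∩ range (γ k)) :=
        ediam_le_sum_ediam hA (by rw [← inter_iUnion, hcov, inter_univ])
    _ ≤ ∑ _ : κ, ε / Fintype.card κ :=
        Finset.sum_le_sum fun k _ => (hD k A hA (hADk k)).trans (min_le_right _ _)
    _ = Fintype.card κ * (ε / Fintype.card κ) := by rw [Finset.sum_const, nsmul_eq_mul]; rfl
    _ ≤ ε := ENNReal.mul_div_le

end Subdivision

section Orbits

open Dynamics

variable {T : Type*} {f : T → T}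

theorem exists_firstHit (A : ℕ → Set T) (D : Finset T) (n : ℕ) :
    ∃ o : Option (Fin n × D), (o = none → ∀ k < n, Disjoint (A k) D) ∧
      ∀ j p, o = some (j, p) → (p : T) ∈ A j ∧ ∀ k < (j : ℕ), Disjoint (A k) D := by
  classical
  by_cases h : ∃ k, k < n ∧ ¬Disjoint (A k) D
  · obtain ⟨hj, hmeet⟩ := Nat.find_spec h
    obtain ⟨p, hpA, hpD⟩ := not_disjoint_iff.1 hmeet
    refine ⟨some (⟨Nat.find h, hj⟩, ⟨p, hpD⟩),
      fun hnone => absurd hnone (Option.some_ne_none _), ?_⟩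
    rintro _ _ ⟨⟩
    exact ⟨hpA, fun k hk => of_not_not fun hd => Nat.find_min h hk ⟨hk.trans hj, hd⟩⟩
  · push Not at h
    exact ⟨none, fun _ => h, fun _ _ hsome => absurd hsome (Option.some_ne_none _).symm⟩

theorem hits_iterate_image_add {J : Type*} {P : J → Set T} {n j : ℕ} {A B : Set T}
    (h : hits (fun i : Fin n × J => f^[i.1] ⁻¹' P i.2) (f^[j] '' A) =
      hits (fun i : Fin n × J => f^[i.1] ⁻¹' P i.2) (f^[j] '' B)) {l : ℕ} (hl : l < n) :
    hits P (f^[l + j] '' A) = hits P (f^[l + j] '' B) := by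
  ext i
  simp only [Function.iterate_add, image_comp, mem_hits_image]
  exact Set.ext_iff.1 h (⟨l, hl⟩, i)

/- Orbits are followed up to their first encounter with `D`; from the point `p` met then onwards,
all images contain the orbit of `p`, and the fan at `p` codes their hit patterns. -/
theorem HasMonotoneFans.codable_hits_iterate [TopologicalSpace T] {κ : Type*} [Fintype κ]
    (hT : HasMonotoneFans κ T) (hf : Continuous f) {J : Type*} [Fintype J] (P : J → Set T)
    (D : Finset T) (n : ℕ) :
    Codable (fun A B : {A : Set T // IsPreconnected A} => ∀ k < n,
        (Disjoint (f^[k] '' A) D ∧ Disjoint (f^[k] '' B) D) ∨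
          hits P (f^[k] '' A) = hits P (f^[k] '' B))
      ((n * D.card + 1) * (n * Fintype.card J + 1) ^ Fintype.card κ) := by
  choose o hnone hsome using fun A : {A : Set T // IsPreconnected A} =>
    exists_firstHit (fun k => f^[k] '' A) D n
  have himage (j : ℕ) (A : {A : Set T // IsPreconnected A}) : IsPreconnected (f^[j] '' A) :=
    A.2.image _ (hf.iterate j).continuousOn
  suffices h : Codable _ (Fintype.card (Option (Fin n × D)) * _) by simpa using h
  refine .of_fiberwise o fun i => ?_
  rcases i with _ | ⟨j, p⟩
  · exact ⟨fun _ => ⟨0, by positivity⟩, fun A B _ hA hB k hk =>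
      .inl ⟨hnone A hA k hk, hnone B hB k hk⟩⟩
  · have hcode := (hT.codable_hits (fun i : Fin n × J => f^[i.1] ⁻¹' P i.2) (p : T)).comap
      fun A => ⟨_, himage j A⟩
    rw [Fintype.card_prod, Fintype.card_fin] at hcode
    refine hcode.mono fun A B hAB hA hB k hk => ?_
    obtain ⟨hpA, hAD⟩ := hsome A j p hA
    obtain ⟨hpB, hBD⟩ := hsome B j p hB
    rcases lt_or_ge k j with hkj | hjk
    · exact .inl ⟨hAD k hkj, hBD k hkj⟩
    · have hk' := hits_iterate_image_add (hAB hpA hpB) ((Nat.sub_le k j).trans_lt hk)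
      rw [Nat.sub_add_cancel hjk] at hk'
      exact .inr hk'

theorem codable_of_isDynCoverOf [PseudoEMetricSpace T] {η : ENNReal} {n : ℕ} {s : Finset T}
    (hs : IsDynCoverOf f univ {p | edist p.1 p.2 ≤ η} n (s : Set T)) :
    Codable (fun x y : T => ∀ k < n, edist (f^[k] x) (f^[k] y) ≤ η + η) s.card := by
  choose c hc hdist using fun x => hs (mem_univ x)
  refine .of_fintype (Fintype.card_coe s).le (fun x => (⟨c x, hc x⟩ : s)) fun x y hxy k hk => ?_
  have hcxy : c x = c y := congrArg Subtype.val hxy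
  calc edist (f^[k] x) (f^[k] y)
      ≤ edist (f^[k] x) (f^[k] (c x)) + edist (f^[k] y) (f^[k] (c x)) := edist_triangle_right _ _ _
    _ ≤ η + η := add_le_add (mem_dynEntourage.1 (hdist x) k hk)
        (hcxy ▸ mem_dynEntourage.1 (hdist y) k hk)

theorem HasMonotoneFans.codable_hausdorffEDist_iterate [PseudoEMetricSpace T]
    {κ : Type*} [Fintype κ] (hT : HasMonotoneFans κ T) (hf : Continuous f) {η : ENNReal}
    {J : Type*} [Fintype J] {P : J → Set T} {D : Finset T} (hcov : ⋃ j, P j = univ)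
    (hP : ∀ j, ediam (P j) ≤ η)
    (hD : ∀ A : Set T, IsPreconnected A → Disjoint A D → ediam A ≤ η) {n : ℕ} {s : Finset T}
    (hs : IsDynCoverOf f univ {p | edist p.1 p.2 ≤ η} n (s : Set T)) :
    Codable (fun A B : {A : Set T // IsConnected A} =>
        ∀ k < n, hausdorffEDist (f^[k] '' A) (f^[k] '' B) ≤ η + (η + η))
      ((n * D.card + 1) * (n * Fintype.card J + 1) ^ Fintype.card κ * s.card) := by
  choose x hx using fun A : {A : Set T // IsConnected A} => A.2.nonempty
  refine (((hT.codable_hits_iterate hf P D n).comap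
    fun A : {A : Set T // IsConnected A} => ⟨A.1, A.2.isPreconnected⟩).and
    ((codable_of_isDynCoverOf hs).comap x)).mono fun A B ⟨hhits, hdist⟩ k hk => ?_
  have hsmall (A : {A : Set T // IsConnected A}) (h : Disjoint (f^[k] '' A) (D : Set T)) :
      ediam (f^[k] '' A) ≤ η := hD _ (A.2.isPreconnected.image _ (hf.iterate k).continuousOn) h
  rcases hhits k hk with ⟨hAD, hBD⟩ | heq
  · exact hausdorffEDist_le_of_ediam_le (hsmall A hAD) (hsmall B hBD)
      (mem_image_of_mem _ (hx A)) (mem_image_of_mem _ (hx B)) (hdist k hk)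
  · exact (hausdorffEDist_le_of_hits_eq hcov hP heq).trans le_self_add

end Orbits

section Growth

open ExpGrowth ENNReal

theorem expGrowthSup_linear_nonpos (d : ℕ) :
    expGrowthSup (fun n => (n * d + 1 : ℝ≥0∞)) ≤ 0 := by
  refine EReal.le_of_forall_lt_iff_le.1 fun b hb => ?_
  have hb : 0 < b := EReal.coe_pos.1 hb
  rw [← expGrowthSup_exp (a := (b : EReal))]
  refine expGrowthSup_le_of_eventually_le (b := ENNReal.ofReal (d / b + 1)) ofReal_ne_top
    (.of_forall fun n => ?_)
  have hreal : (n * d + 1 : ℝ) ≤ (d / b + 1) * Real.exp (b * n) :=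
    calc (n * d + 1 : ℝ) ≤ (n * d + 1) + (d / b + b * n) := le_add_of_nonneg_right (by positivity)
      _ = (d / b + 1) * (b * n + 1) := by field_simp; ring
      _ ≤ (d / b + 1) * Real.exp (b * n) := by gcongr; exact Real.add_one_le_exp _
  have hexp : EReal.exp (b * n) = ENNReal.ofReal (Real.exp (b * n)) := by
    rw [← EReal.exp_coe, EReal.coe_mul, EReal.coe_natCast]
  calc (n * d + 1 : ℝ≥0∞) = ENNReal.ofReal (n * d + 1) := by
        rw [← Nat.cast_mul, ← Nat.cast_add_one, ← Nat.cast_mul, ← Nat.cast_add_one, ofReal_natCast]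
    _ ≤ ENNReal.ofReal (d / b + 1) * EReal.exp (b * n) := by
        rw [hexp, ← ofReal_mul (by positivity)]
        exact ofReal_le_ofReal hreal

theorem expGrowthSup_mul_nonpos {u v : ℕ → ℝ≥0∞} (hu : expGrowthSup u ≤ 0)
    (hv : expGrowthSup v ≤ 0) : expGrowthSup (u * v) ≤ 0 :=
  (expGrowthSup_mul_le (.inr (hv.trans_lt EReal.zero_lt_top).ne)
    (.inl (hu.trans_lt EReal.zero_lt_top).ne)).trans (add_nonpos hu hv)

theorem expGrowthSup_npow (u : ℕ → ℝ≥0∞) (k : ℕ) :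
    expGrowthSup (u ^ k) = k * expGrowthSup u := by
  unfold expGrowthSup
  rw [← EReal.limsup_const_mul_of_nonneg_of_ne_top (mod_cast Nat.zero_le k)
    (EReal.natCast_ne_top k)]
  congr! 2 with n
  rw [Pi.pow_apply, log_pow, EReal.mul_div]

theorem expGrowthSup_npow_nonpos {u : ℕ → ℝ≥0∞} (hu : expGrowthSup u ≤ 0) (k : ℕ) :
    expGrowthSup (u ^ k) ≤ 0 := by
  rw [expGrowthSup_npow]
  exact EReal.mul_nonpos_iff.2 (.inl ⟨mod_cast Nat.zero_le k, hu⟩)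

theorem expGrowthSup_linear_mul_pow_nonpos {u : ℕ → ℝ≥0∞} (hu : expGrowthSup u ≤ 0)
    (a b k m : ℕ) :
    expGrowthSup (fun n => ((n * a + 1) * (n * b + 1) ^ k * u n) ^ m) ≤ 0 :=
  expGrowthSup_npow_nonpos (expGrowthSup_mul_nonpos (expGrowthSup_mul_nonpos
    (expGrowthSup_linear_nonpos a) (expGrowthSup_npow_nonpos (expGrowthSup_linear_nonpos b) k)) hu)
    m

theorem eq_top_of_forall_natCast_succ_mul_le {x y : EReal} (hx : 0 < x)
    (h : ∀ k : ℕ, (k + 1 : ℕ) * x ≤ y) : y = ⊤ := by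
  obtain ⟨c, hc, hcx⟩ := EReal.lt_iff_exists_real_btwn.1 hx
  refine EReal.eq_top_iff_forall_lt y |>.2 fun r => ?_
  obtain ⟨k, hk⟩ := exists_nat_gt (r / c)
  have hk : r / c < (k + 1 : ℕ) := hk.trans (mod_cast k.lt_succ_self)
  calc (r : EReal) < ((k + 1 : ℕ) * c : ℝ) :=
        EReal.coe_lt_coe_iff.2 ((div_lt_iff₀ (EReal.coe_pos.1 hc)).1 hk)
    _ = (k + 1 : ℕ) * (c : EReal) := by rw [EReal.coe_mul, EReal.coe_natCast]
    _ ≤ (k + 1 : ℕ) * x := mul_le_mul_of_nonneg_left hcx.le (mod_cast (k + 1).zero_le)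
    _ ≤ y := h k

end Growth

section Envelope

open Dynamics

theorem hausdorffEDist_graphOf_le {X J : Type*} [PseudoEMetricSpace X] {φ ψ : X → X}
    {P : J → Set X} {ε : ENNReal} (hcov : ⋃ j, P j = univ) (hP : ∀ j, ediam (P j) ≤ ε)
    (hφψ : ∀ j, hausdorffEDist (φ '' P j) (ψ '' P j) ≤ ε) :
    hausdorffEDist (graphOf φ) (graphOf ψ) ≤ ε := by
  refine le_of_forall_gt_imp_ge_of_dense fun r hr => ?_
  have hclose : ∀ φ ψ : X → X, (∀ j, hausdorffEDist (φ '' P j) (ψ '' P j) ≤ ε) →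
      ∀ p ∈ graphOf φ, ∃ q ∈ graphOf ψ, edist p q ≤ r := by
    rintro φ ψ hφψ ⟨x, _⟩ (rfl : _ = φ x)
    obtain ⟨j, hx⟩ := mem_iUnion.1 (hcov.symm ▸ mem_univ x)
    obtain ⟨_, ⟨y, hy, rfl⟩, hxy⟩ :=
      exists_edist_lt_of_hausdorffEDist_lt (mem_image_of_mem φ hx) ((hφψ j).trans_lt hr)
    exact ⟨(y, ψ y), rfl, max_le (((edist_le_ediam_of_mem hx hy).trans (hP j)).trans hr.le) hxy.le⟩
  exact hausdorffEDist_le_of_mem_edist (hclose φ ψ hφψ)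
    (hclose ψ φ fun j => hausdorffEDist_comm.trans_le (hφψ j))

variable {T : Type*} [MetricSpace T] {f : T → T}
  {F : ↥(FunctionalEnvelope T) → ↥(FunctionalEnvelope T)}

/-- The graph of a continuous self-map of a compact space, as a point of the functional
envelope. -/
def envelopeGraph [CompactSpace T] [Nonempty T] (φ : C(T, T)) : ↥(FunctionalEnvelope T) :=
  have hgraph : graphOf φ = range fun x => (x, φ x) := by
    ext ⟨x, y⟩
    simp [graphOf, eq_comm]
  ⟨⟨⟨graphOf φ, hgraph ▸ isCompact_range (by fun_prop)⟩, hgraph ▸ range_nonempty _⟩,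
    subset_closure ⟨φ, φ.continuous, rfl⟩⟩

theorem denseRange_envelopeGraph [CompactSpace T] [Nonempty T] :
    DenseRange (envelopeGraph (T := T)) := by
  refine fun G => closure_subtype.2 (closure_mono ?_ G.2)
  rintro K ⟨φ, hφ, hK⟩
  exact ⟨_, ⟨⟨φ, hφ⟩, rfl⟩, NonemptyCompacts.ext hK.symm⟩

theorem IsEnvelopeMap.continuous (hF : IsEnvelopeMap f F) (hf : Continuous f) : Continuous F := by
  have hf' : Continuous (Prod.map id f : T × T → T × T) := continuous_id.prodMap hf
  have hcoe : Subtype.val ∘ F = NonemptyCompacts.map _ hf' ∘ Subtype.val :=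
    funext fun G => NonemptyCompacts.ext (hF G)
  rw [continuous_induced_rng, hcoe]
  exact hf'.nonemptyCompacts_map.comp continuous_subtype_val

theorem IsEnvelopeMap.coe_iterate_envelopeGraph [CompactSpace T] [Nonempty T]
    (hF : IsEnvelopeMap f F) (n : ℕ) (φ : C(T, T)) :
    ((F^[n] (envelopeGraph φ) : NonemptyCompacts (T × T)) : Set (T × T)) =
      graphOf (f^[n] ∘ φ) := by
  induction n with
  | zero => rfl
  | succ n ih =>
    rw [Function.iterate_succ_apply', hF, ih, Function.iterate_succ']
    ext ⟨x, y⟩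
    simp [graphOf, eq_comm]

theorem edist_eq_hausdorffEDist (G H : ↥(FunctionalEnvelope T)) :
    edist G H = hausdorffEDist (G.1 : Set (T × T)) H.1 := rfl

theorem HasMonotoneFans.coverMincard_range_envelopeGraph_le [CompactSpace T] [Nonempty T]
    {κ : Type*} [Fintype κ] (hT : HasMonotoneFans κ T) (hf : Continuous f)
    (hF : IsEnvelopeMap f F) {η : ENNReal} {J : Type*} [Fintype J] {P : J → Set T} {D : Finset T}
    (hcov : ⋃ j, P j = univ) (hP : ∀ j, IsConnected (P j) ∧ ediam (P j) ≤ η)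
    (hD : ∀ A : Set T, IsPreconnected A → Disjoint A D → ediam A ≤ η) {n : ℕ} {s : Finset T}
    (hs : IsDynCoverOf f univ {p | edist p.1 p.2 ≤ η} n (s : Set T)) :
    coverMincard F (range envelopeGraph) {p | edist p.1 p.2 ≤ η + (η + η)} n ≤
      (((n * D.card + 1) * (n * Fintype.card J + 1) ^ Fintype.card κ * s.card) ^ Fintype.card J
        : ℕ) := by
  have hcode := ((hT.codable_hausdorffEDist_iterate hf hcov (fun j => (hP j).2) hD hs).pi
    (ι := J)).comap fun (φ : C(T, T)) j => ⟨φ '' P j, (hP j).1.image _ φ.continuous.continuousOn⟩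
  refine (hcode.mono fun φ ψ hφψ => mem_dynEntourage.2 fun k hk => ?_).coverMincard_range_le
  change edist _ _ ≤ _
  rw [edist_eq_hausdorffEDist, hF.coe_iterate_envelopeGraph, hF.coe_iterate_envelopeGraph]
  refine hausdorffEDist_graphOf_le hcov (fun j => (hP j).2.trans le_self_add) fun j => ?_
  rw [image_comp, image_comp]
  exact hφψ j k hk

theorem HasMonotoneFans.coverEntropy_envelope_nonpos [CompactSpace T] [Nonempty T]
    {κ : Type*} [Finite κ] (hT : HasMonotoneFans κ T) (hf : Continuous f)
    (hF : IsEnvelopeMap f F) (h0 : coverEntropy f univ ≤ 0) : coverEntropy F univ ≤ 0 := by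
  cases nonempty_fintype κ
  rw [← denseRange_envelopeGraph.closure_range, coverEntropy_closure (hF.continuous hf),
    coverEntropy_eq_iSup_basis uniformity_basis_edist_le]
  refine iSup₂_le fun ε hε => ?_
  obtain ⟨η, hη, rfl⟩ : ∃ η > 0, η + (η + η) = ε :=
    ⟨ε / 3, ENNReal.div_pos hε.ne' (by simp), by rw [← add_assoc, ENNReal.add_thirds]⟩
  obtain ⟨J, _, P, D, hcov, hP, hD⟩ := hT.exists_subdivision hη
  set V : SetRel T T := {p | edist p.1 p.2 ≤ η}
  have hV : V ∈ uniformity T := uniformity_basis_edist_le.mem_of_mem hη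
  choose s hs hcard using fun n => (coverMincard_finite_iff f univ V n).1
    (coverMincard_finite_of_isCompact_uniformContinuous isCompact_univ
      (CompactSpace.uniformContinuous_of_continuous hf) hV n)
  set u : ℕ → ENNReal := fun n => (coverMincard f univ V n).toENNReal
  have hu : ExpGrowth.expGrowthSup u ≤ 0 :=
    (coverEntropyEntourage_le_coverEntropy f univ hV).trans h0
  refine (ExpGrowth.expGrowthSup_monotone fun n => ?_).trans
    (expGrowthSup_linear_mul_pow_nonpos hu D.card (Fintype.card J) (Fintype.card κ)
      (Fintype.card J))
  refine (ENat.toENNReal_mono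
    (hT.coverMincard_range_envelopeGraph_le hf hF hcov hP hD (hs n))).trans_eq ?_
  simp [u, ← hcard]

end Envelope

section Interpolation

theorem exists_continuousMap_eq_on_ball {X Y : Type*} [MetricSpace X] [TopologicalSpace Y]
    [PathConnectedSpace Y] {k : ℕ} {x : Fin (k + 1) → X} (hx : Function.Injective x) :
    ∃ δ > 0, ∀ y : Fin (k + 1) → Y, ∃ φ : C(X, Y), ∀ i, ∀ z ∈ ball (x i) δ, φ z = y i := by
  have hsep : ∀ᶠ δ : ℝ in 𝓝[>] 0, ∀ i j, i ≠ j → δ + δ + δ < dist (x i) (x j) := by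
    simp only [eventually_all]
    refine fun i j hij => Filter.Tendsto.eventually_lt_const (dist_pos.2 (hx.ne hij)) ?_
    exact tendsto_nhdsWithin_of_tendsto_nhds (Continuous.tendsto' (by fun_prop) 0 0 (by simp))
  obtain ⟨δ, hsep, hδ⟩ := (hsep.and self_mem_nhdsWithin).exists
  refine ⟨δ, hδ, fun y => ?_⟩
  obtain ⟨γ, t, ht⟩ := PathConnectedSpace.exists_path_through_family' y
  let u : X → ℝ := fun z => ∑ i, t i * (thickenedIndicator hδ (ball (x i) δ) z : ℝ)
  have hu : Continuous u := by fun_prop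
  refine ⟨⟨γ.extend ∘ u, γ.continuous_extend.comp hu⟩, fun i z hz => ?_⟩
  have hzero : ∀ j ≠ i, z ∉ thickening δ (ball (x j) δ) := fun j hj hzj => by
    obtain ⟨w, hw, hzw⟩ := mem_thickening_iff.1 hzj
    have := hsep i j hj.symm
    linarith [dist_triangle4 (x i) z w (x j), mem_ball'.1 hz, mem_ball.1 hw]
  have huz : u z = t i :=
    (Finset.sum_eq_single i (fun j _ hj => by rw [thickenedIndicator_zero hδ _ (hzero j hj)]; simp)
      (by simp)).trans (by rw [thickenedIndicator_one hδ _ hz]; simp)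
  simp [huz, ht]

end Interpolation

section PositiveEntropy

open Dynamics ExpGrowth

theorem card_pow_le_netMaxcard {X Y ι : Type*} [Fintype ι] {f : X → X} {F : Y → Y}
    {V : SetRel X X} {W : SetRel Y Y} [V.IsRefl] [W.IsRefl] {n : ℕ} {Φ : (ι → X) → Y}
    (hΦ : ∀ e e' y, (Φ e, y) ∈ dynEntourage F W n → (Φ e', y) ∈ dynEntourage F W n →
      ∀ i, (e i, e' i) ∈ dynEntourage f V n)
    {s : Finset X} (hs : IsDynNetIn f univ V n (s : Set X)) :
    (s.card ^ Fintype.card ι : ℕ) ≤ netMaxcard F univ W n := by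
  classical
  have heq : ∀ e ∈ Fintype.piFinset fun _ : ι => s, ∀ e' ∈ Fintype.piFinset fun _ : ι => s,
      ∀ y, (Φ e, y) ∈ dynEntourage F W n → (Φ e', y) ∈ dynEntourage F W n → e = e' :=
    fun e he e' he' y hy hy' => funext fun i =>
      hs.2.elim_set (Fintype.mem_piFinset.1 he i) (Fintype.mem_piFinset.1 he' i) (e' i)
        (hΦ e e' y hy hy' i) ((dynEntourage f V n).rfl)
  have hinj : InjOn Φ (Fintype.piFinset fun _ : ι => s) := fun e he e' he' h =>
    heq e he e' he' (Φ e) (dynEntourage F W n).rfl (h ▸ (dynEntourage F W n).rfl)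
  have hnet : IsDynNetIn F univ W n
      (((Fintype.piFinset fun _ : ι => s).image Φ : Finset Y) : Set Y) := by
    refine ⟨subset_univ _, ?_⟩
    rw [Finset.coe_image]
    rintro _ ⟨e, he, rfl⟩ _ ⟨e', he', rfl⟩ hne
    exact disjoint_left.2 fun y hy hy' => hne (congrArg Φ (heq e he e' he' y hy hy'))
  simpa [Finset.card_image_of_injOn hinj] using hnet.card_le_netMaxcard

theorem exists_edist_lt_of_hausdorffEDist_graphOf_lt {X : Type*} [PseudoEMetricSpace X]
    {φ ψ : X → X} {r : ENNReal} (h : hausdorffEDist (graphOf φ) (graphOf ψ) < r) (x : X) :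
    ∃ z, edist x z < r ∧ edist (φ x) (ψ z) < r := by
  obtain ⟨⟨z, _⟩, rfl : _ = ψ z, hlt⟩ :=
    exists_edist_lt_of_hausdorffEDist_lt (show (x, φ x) ∈ graphOf φ from rfl) h
  exact ⟨z, max_lt_iff.1 hlt⟩

variable {T : Type*} [MetricSpace T] {f : T → T}
  {F : ↥(FunctionalEnvelope T) → ↥(FunctionalEnvelope T)}

theorem IsEnvelopeMap.edist_iterate_lt [CompactSpace T] [Nonempty T] (hF : IsEnvelopeMap f F)
    {φ ψ : C(T, T)} {x y : T} {r : ENNReal} (hψ : ∀ z, edist x z < r → ψ z = y) {n : ℕ}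
    (h : edist (F^[n] (envelopeGraph φ)) (F^[n] (envelopeGraph ψ)) < r) :
    edist (f^[n] (φ x)) (f^[n] y) < r := by
  rw [edist_eq_hausdorffEDist, hF.coe_iterate_envelopeGraph, hF.coe_iterate_envelopeGraph] at h
  obtain ⟨z, hz, hlt⟩ := exists_edist_lt_of_hausdorffEDist_graphOf_lt h x
  rwa [Function.comp_apply, Function.comp_apply, hψ z hz] at hlt

theorem IsEnvelopeMap.exists_netMaxcard_pow_le [CompactSpace T] [PathConnectedSpace T]
    [Nontrivial T] (hf : Continuous f) (hF : IsEnvelopeMap f F) {V : SetRel T T}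
    (hV : V ∈ uniformity T) (k : ℕ) : ∃ W ∈ uniformity ↥(FunctionalEnvelope T), ∀ n,
      netMaxcard f univ V n ^ (k + 1) ≤ netMaxcard F univ W n := by
  obtain ⟨ε, hε, hεV⟩ := mem_uniformity_edist.1 hV
  have := PreconnectedSpace.infinite (X := T)
  obtain ⟨x, hx⟩ : ∃ x : Fin (k + 1) → T, Function.Injective x :=
    ⟨_, (Infinite.natEmbedding T).injective.comp Fin.val_injective⟩
  obtain ⟨δ, hδ, hφ⟩ := exists_continuousMap_eq_on_ball (Y := T) hx
  choose φ hφ using hφ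
  obtain ⟨W, hW, hsymm, hWr⟩ := comp_symm_mem_uniformity_sets
    (edist_mem_uniformity (α := ↥(FunctionalEnvelope T))
      (lt_min (ENNReal.ofReal_pos.2 hδ) hε))
  have := isRefl_of_mem_uniformity hV
  have := isRefl_of_mem_uniformity hW
  refine ⟨W, hW, fun n => ?_⟩
  obtain ⟨s, hs, hcard⟩ := (netMaxcard_finite_iff f univ V n).1
    ((netMaxcard_le_coverMincard f univ n).trans_lt
      (coverMincard_finite_of_isCompact_uniformContinuous isCompact_univ
        (CompactSpace.uniformContinuous_of_continuous hf) hV n))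
  have hpow : (s.card ^ Fintype.card (Fin (k + 1)) : ℕ) ≤ netMaxcard F univ W n := by
    refine card_pow_le_netMaxcard (Φ := fun e => envelopeGraph (φ e))
      (fun e e' G hG hG' i => mem_dynEntourage.2 fun j hj => hεV ?_) hs
    have hconst : ∀ z, edist (x i) z < min (ENNReal.ofReal δ) ε → φ e' z = e' i := fun z hz =>
      hφ e' i z (mem_ball'.2 (edist_lt_ofReal.1 (hz.trans_le (min_le_left _ _))))
    have hclose := @hWr (F^[j] (envelopeGraph (φ e)), F^[j] (envelopeGraph (φ e')))
      ⟨_, mem_dynEntourage.1 hG j hj, hsymm.symm _ _ (mem_dynEntourage.1 hG' j hj)⟩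
    have hlt := hF.edist_iterate_lt hconst hclose
    rw [hφ e i _ (mem_ball_self hδ)] at hlt
    exact hlt.trans_le (min_le_right _ _)
  simpa [← hcard] using hpow

theorem IsEnvelopeMap.coverEntropy_eq_top [CompactSpace T] [PathConnectedSpace T] [Nontrivial T]
    (hf : Continuous f) (hF : IsEnvelopeMap f F) (h0 : 0 < coverEntropy f univ) :
    coverEntropy F univ = ⊤ := by
  rw [coverEntropy_eq_iSup_netEntropyEntourage] at h0
  obtain ⟨V, hV, h0⟩ := lt_biSup_iff.1 h0
  refine eq_top_of_forall_natCast_succ_mul_le h0 fun k => ?_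
  obtain ⟨W, hW, hle⟩ := hF.exists_netMaxcard_pow_le hf hV k
  refine le_trans ?_ (netEntropyEntourage_le_coverEntropy F univ hW)
  rw [netEntropyEntourage, ← expGrowthSup_npow]
  exact expGrowthSup_monotone fun n => by simpa using ENat.toENNReal_mono (hle n)

theorem coverEntropy_of_subsingleton {X : Type*} [UniformSpace X] [Subsingleton X] [Nonempty X]
    (g : X → X) : coverEntropy g univ = 0 := by
  refine (iSup₂_le fun U hU => ?_).antisymm (coverEntropy_nonneg g univ_nonempty)
  obtain rfl : U = univ := eq_univ_of_forall fun ⟨x, y⟩ =>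
    Subsingleton.elim x y ▸ refl_mem_uniformity hU
  exact (coverEntropyEntourage_univ g univ_nonempty).le

end PositiveEntropy

/-- zero entropy of a tree map gives zero entropy of its
functional envelope; positive entropy gives infinite entropy. -/
theorem entropy_functional_envelope {T : Type*} [MetricSpace T]
    (hT : IsTreeSpace T) (f : T → T) (hf : Continuous f) :
    (entropy f = 0 →
      ∀ F : ↥(FunctionalEnvelope T) → ↥(FunctionalEnvelope T),
        IsEnvelopeMap f F → entropy F = 0) ∧
    (0 < entropy f →
      ∀ F : ↥(FunctionalEnvelope T) → ↥(FunctionalEnvelope T),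
        IsEnvelopeMap f F → entropy F = ⊤) := by
  have := hT.compact
  have := hT.pathConnectedSpace
  refine ⟨fun h0 F hF => ?_, fun h0 F hF => ?_⟩
  · obtain ⟨κ, _, hfan⟩ := hT.exists_hasMonotoneFans
    exact (hfan.coverEntropy_envelope_nonpos hf hF h0.le).antisymm
      (Dynamics.coverEntropy_nonneg F ⟨envelopeGraph (.id T), mem_univ _⟩)
  · cases subsingleton_or_nontrivial T
    · exact absurd h0 (coverEntropy_of_subsingleton f).not_gt
    · exact hF.coverEntropy_eq_top hf h0
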